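/- Let p be a prime with p ≡ 1 (mod 8) and let r be a prime with r ≡ 3 (mod 4) such that r is a quadratic nonresidue modulo p. Then the quaternion algebra ℍ[ℚ_p, −r, −p] over the p-adic field ℚ_p is a division algebra: every nonzero element is a unit. Equivalently, if q ∈ ℍ[ℚ_p, −r, −p] satisfies q·(star q) = 0 then q = 0. -/

import Mathlib

/-!
The reduced norm of `t + xi + yj + zk` is `(t² + r x²) + p (y² + r z²)`. Since `p ≡ 1 (mod 4)`, `-1`
is a square mod `p`, so `-r` is a nonsquare unit and the binary form `a² + r b²` is anisotropic
mod `p`. Hence over `ℚ_p` its absolute value is the square of the larger of `‖a‖` and `‖b‖`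
(`norm_sq_add_mul_sq`), so its nonzero values have even valuation. If the reduced norm vanishes,
then `t² + r x²` and `-p (y² + r z²)` agree, although nonzero values of the first have even
valuation and those of the second odd valuation; so both are zero, and all four coordinates
vanish (`norm_form_anisotropic`). An element with nonzero reduced norm `N` has inverse
`star q * N⁻¹`.
-/

open Quaternion

lemma norm_sq_add_of_not_isSquare (p r : ℕ) [Fact p.Prime]
    (hns : ¬ IsSquare (-(r : ZMod p))) (u : ℚ_[p]) (hu : ‖u‖ ≤ 1) : ‖u ^ 2 + r‖ = 1 := by
  let v : ℤ_[p] := ⟨u, hu⟩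
  have h1 : ‖v ^ 2 + (r : ℤ_[p])‖ = 1 := by
    by_contra h
    have hlt : ‖v ^ 2 + (r : ℤ_[p])‖ < 1 := lt_of_le_of_ne (PadicInt.norm_le_one _) h
    have hmem : v ^ 2 + (r : ℤ_[p]) ∈ RingHom.ker (PadicInt.toZMod (p := p)) := by
      rw [PadicInt.ker_toZMod, IsLocalRing.mem_maximalIdeal]
      exact PadicInt.mem_nonunits.2 hlt
    rw [RingHom.mem_ker, map_add, map_pow, map_natCast] at hmem
    exact hns ⟨PadicInt.toZMod v, by linear_combination -hmem⟩
  rw [PadicInt.norm_def] at h1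
  push_cast at h1
  exact h1

/-- The absolute value of the anisotropic form `a² + r b²` is a square of the absolute value of one
of the arguments, namely the larger one. -/
lemma norm_sq_add_mul_sq (p r : ℕ) [Fact p.Prime]
    (hns : ¬ IsSquare (-(r : ZMod p))) (a b : ℚ_[p]) :
    ∃ w : ℚ_[p], ‖a ^ 2 + r * b ^ 2‖ = ‖w‖ ^ 2 ∧ (w = 0 → a = 0 ∧ b = 0) := by
  rcases le_or_gt ‖a‖ ‖b‖ with h | h
  · refine ⟨b, ?_, fun hb => ⟨by simpa [hb] using h, hb⟩⟩
    by_cases hb : b = 0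
    · have ha : a = 0 := by simpa [hb] using h
      simp [ha, hb]
    · have hu : ‖a / b‖ ≤ 1 := by
        rw [norm_div]
        exact div_le_one_of_le₀ h (norm_nonneg _)
      have he : a ^ 2 + r * b ^ 2 = ((a / b) ^ 2 + r) * b ^ 2 := by field_simp
      rw [he, norm_mul, norm_sq_add_of_not_isSquare p r hns _ hu, one_mul, norm_pow]
  · refine ⟨a, ?_, fun ha => absurd h (by simp [ha])⟩
    have hr1 : ‖(r : ℚ_[p])‖ ≤ 1 := by
      simpa using Padic.norm_int_le_one (p := p) (r : ℤ)
    have hlt : ‖(r : ℚ_[p]) * b ^ 2‖ < ‖a ^ 2‖ := by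
      rw [norm_mul, norm_pow, norm_pow]
      calc ‖(r : ℚ_[p])‖ * ‖b‖ ^ 2 ≤ 1 * ‖b‖ ^ 2 := by gcongr
        _ < ‖a‖ ^ 2 := by rw [one_mul]; gcongr
    rw [IsUltrametricDist.norm_add_eq_max_of_norm_ne_norm hlt.ne', max_eq_left hlt.le, norm_pow]

lemma norm_form_anisotropic (p r : ℕ) [Fact p.Prime]
    (hns : ¬ IsSquare (-(r : ZMod p))) (t x y z : ℚ_[p])
    (h : (t ^ 2 + r * x ^ 2) + p * (y ^ 2 + r * z ^ 2) = 0) :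
    t = 0 ∧ x = 0 ∧ y = 0 ∧ z = 0 := by
  obtain ⟨w₁, e₁, h₁⟩ := norm_sq_add_mul_sq p r hns t x
  obtain ⟨w₂, e₂, h₂⟩ := norm_sq_add_mul_sq p r hns y z
  have hp0 : (p : ℝ) ≠ 0 := by exact_mod_cast (Fact.out : p.Prime).ne_zero
  have hp1 : (1 : ℝ) < p := by exact_mod_cast (Fact.out : p.Prime).one_lt
  have key : ‖w₁‖ ^ 2 = (p : ℝ)⁻¹ * ‖w₂‖ ^ 2 := by
    rw [← e₁, ← e₂, eq_neg_of_add_eq_zero_left h, norm_neg, norm_mul, Padic.norm_p]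
  by_cases hw₁ : w₁ = 0
  · have hw₂ : w₂ = 0 := by simpa [hw₁, hp0] using key.symm
    exact ⟨(h₁ hw₁).1, (h₁ hw₁).2, h₂ hw₂⟩
  · have hw₂ : w₂ ≠ 0 := by
      rintro rfl
      exact hw₁ (by simpa using key)
    rw [Padic.norm_eq_zpow_neg_valuation hw₁, Padic.norm_eq_zpow_neg_valuation hw₂, ← zpow_neg_one,
      ← zpow_natCast, ← zpow_natCast, ← zpow_mul, ← zpow_mul, ← zpow_add₀ hp0] at key
    have := zpow_right_injective₀ (by linarith) hp1.ne' key
    push_cast at this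
    omega

theorem quaternion_algebra_ramified_at_p_one_mod_eight
    (p r : ℕ) [Fact p.Prime] (hr : r.Prime) (hp : p % 8 = 1) (hr4 : r % 4 = 3)
    (hnr : ¬ IsSquare (r : ZMod p)) :
    (∀ q : ℍ[ℚ_[p], -(r : ℚ_[p]), -(p : ℚ_[p])], q ≠ 0 → IsUnit q) ∧
    (∀ q : ℍ[ℚ_[p], -(r : ℚ_[p]), -(p : ℚ_[p])], q * star q = 0 → q = 0) := by
  have hns : ¬ IsSquare (-(r : ZMod p)) := by
    intro h
    have hm : IsSquare (-1 : ZMod p) := ZMod.exists_sq_eq_neg_one_iff.2 (by omega)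
    exact hnr (by simpa using hm.mul h)
  have aniso : ∀ q : ℍ[ℚ_[p], -(r : ℚ_[p]), -(p : ℚ_[p])], (q * star q).re = 0 → q = 0 := by
    intro q hq
    have hN : (q.re ^ 2 + r * q.imI ^ 2) + p * (q.imJ ^ 2 + r * q.imK ^ 2) = 0 := by
      refine Eq.trans ?_ hq
      simp
      ring
    obtain ⟨h1, h2, h3, h4⟩ := norm_form_anisotropic p r hns _ _ _ _ hN
    ext <;> simpa
  refine ⟨fun q hq => ?_, fun q hq => aniso q (by simp [hq])⟩
  have hN : (q * star q).re ≠ 0 := fun h => hq (aniso q h)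
  have hmul := QuaternionAlgebra.mul_star_eq_coe q
  set N := (q * star q).re with hNdef
  have hcoe : (N : ℍ[ℚ_[p], -(r : ℚ_[p]), -(p : ℚ_[p])]) * (N⁻¹ : ℚ_[p]) = 1 := by
    rw [← QuaternionAlgebra.coe_mul, mul_inv_cancel₀ hN, QuaternionAlgebra.coe_one]
  have hc : star q * q = q * star q := star_comm_self' q
  refine ⟨⟨q, star q * (N⁻¹ : ℚ_[p]), ?_, ?_⟩, rfl⟩
  · rw [← mul_assoc, hmul, hcoe]
  · rw [mul_assoc, QuaternionAlgebra.coe_commutes, ← mul_assoc, hc, hmul, hcoe]
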